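/- arXiv:0705.3424 — 3 statements merged into one kernel-verified Lean document; each statement's English description precedes it below -/
import Mathlib

section
/- Let 𝑨 = (A_1,…,A_k) be a tuple of subsets of X which has positive upper μ-independence density, and suppose A_1 = A_{1,1} ∪ A_{1,2}. Then at least one of the tuples 𝑨_1 = (A_{1,1}, A_2,…,A_k) and 𝑨_2 = (A_{1,2}, A_2,…,A_k) has positive upper μ-independence density. -/
open MeasureTheory Set
open scoped Classical ENNReal

/-- `F` is a nonempty `(K,δ)`-invariant finite subset of the group `G`. -/
def FolnerInv {G : Type*} [Group G] (K : Finset G) (δ : ℝ) (F : Finset G) : Prop :=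
  F.Nonempty ∧
    (1 - δ) * (F.card : ℝ) ≤ (((F : Set G)) ∩ {s : G | ∀ g ∈ K, g * s ∈ F}).ncard

/-- The Følner characterisation of amenability for a discrete group `G`. -/
def FolnerAmenable (G : Type*) [Group G] : Prop :=
  ∀ (K : Finset G) (δ : ℝ), 0 < δ → ∃ F : Finset G, FolnerInv K δ F

/-- The limit supremum of `ψ F / |F|` as `F` becomes more and more invariant. -/
noncomputable def invLimsup {G : Type*} [Group G] (ψ : Finset G → ℝ) : ℝ :=
  ⨅ (K : Finset G) (δ : {d : ℝ // 0 < d}),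
    sSup ((fun F : Finset G => ψ F / (F.card : ℝ)) '' {F : Finset G | FolnerInv K δ.1 F})

/-- The limit infimum of `ψ F / |F|` as `F` becomes more and more invariant. -/
noncomputable def invLiminf {G : Type*} [Group G] (ψ : Finset G → ℝ) : ℝ :=
  ⨆ (K : Finset G) (δ : {d : ℝ // 0 < d}),
    sInf ((fun F : Finset G => ψ F / (F.card : ℝ)) '' {F : Finset G | FolnerInv K δ.1 F})

/-- `J ⊆ G` is an independence set for the tuple `A` of subsets of `X` relative to the
map `D : G → Set X`. -/
def IndepRel {G X : Type*} [Group G] [MulAction G X] {k : ℕ} (A : Fin k → Set X)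
    (D : G → Set X) (J : Set G) : Prop :=
  ∀ F : Finset G, (F : Set G) ⊆ J → F.Nonempty → ∀ σ : G → Fin k,
    (⋂ s ∈ F, (D s ∩ (fun x => s • x) ⁻¹' A (σ s))).Nonempty

/-- `J ⊆ G` is an independence set for the tuple `A` relative to the subset `D ⊆ X`. -/
def IndepSet {G X : Type*} [Group G] [MulAction G X] {k : ℕ} (A : Fin k → Set X)
    (D : Set X) (J : Set G) : Prop :=
  IndepRel A (fun _ => D) J

/-- The maximum of `|F ∩ J|` over independence sets `J` for `A` relative to `D`. -/
noncomputable def maxIndep {G X : Type*} [Group G] [MulAction G X] {k : ℕ}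
    (A : Fin k → Set X) (D : G → Set X) (F : Finset G) : ℕ :=
  sSup {m : ℕ | ∃ J : Set G, IndepRel A D J ∧ m = (((F : Set G)) ∩ J).ncard}

/-- `φ_{A,δ}(F)`: the minimum over Borel sets `D` with `μ(D) ≥ 1 - δ` of the maximum
of `|F ∩ J|` over independence sets `J` for `A` relative to `D`. -/
noncomputable def phiConst {G X : Type*} [Group G] [MulAction G X] [MeasurableSpace X]
    (μ : Measure X) {k : ℕ} (A : Fin k → Set X) (δ : ℝ) (F : Finset G) : ℕ :=
  sInf {m : ℕ | ∃ D : Set X, MeasurableSet D ∧ 1 - δ ≤ (μ D).toReal ∧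
    m = maxIndep A (fun _ : G => D) F}

/-- `φ'_{A,δ}(F)`: as `phiConst` but with maps `D : G → Set X` with `μ(D s) ≥ 1 - δ`
for all `s`. -/
noncomputable def phiMap {G X : Type*} [Group G] [MulAction G X] [MeasurableSpace X]
    (μ : Measure X) {k : ℕ} (A : Fin k → Set X) (δ : ℝ) (F : Finset G) : ℕ :=
  sInf {m : ℕ | ∃ D : G → Set X, (∀ s, MeasurableSet (D s)) ∧
    (∀ s, 1 - δ ≤ (μ (D s)).toReal) ∧ m = maxIndep A D F}

/-- The upper `μ`-independence density `Ī_μ(A)` of the tuple `A`. -/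
noncomputable def upperIndepDens (G : Type*) {X : Type*} [Group G] [MulAction G X]
    [MeasurableSpace X] (μ : Measure X) {k : ℕ} (A : Fin k → Set X) : ℝ :=
  ⨆ δ : {d : ℝ // 0 < d}, invLimsup (fun F : Finset G => (phiConst μ A δ.1 F : ℝ))

/-- The lower `μ`-independence density `I̲_μ(A)` of the tuple `A`. -/
noncomputable def lowerIndepDens (G : Type*) {X : Type*} [Group G] [MulAction G X]
    [MeasurableSpace X] (μ : Measure X) {k : ℕ} (A : Fin k → Set X) : ℝ :=
  ⨆ δ : {d : ℝ // 0 < d}, invLiminf (fun F : Finset G => (phiConst μ A δ.1 F : ℝ))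

/-- The measure `μ` is invariant under the action of `G`. -/
def InvariantMeasure (G : Type*) {X : Type*} [Group G] [MulAction G X] [MeasurableSpace X]
    (μ : Measure X) : Prop :=
  ∀ (s : G) (B : Set X), MeasurableSet B → μ ((fun x => s • x) ⁻¹' B) = μ B

/-- The entropy `H_μ(𝒫^F)` of the join `⋁_{s ∈ F} s⁻¹𝒫` of the finite partition `P`. -/
noncomputable def HJoin {G X : Type*} [Group G] [MulAction G X] [MeasurableSpace X]
    (μ : Measure X) {k : ℕ} (P : Fin k → Set X) (F : Finset G) : ℝ :=
  ∑ f : ↥F → Fin k,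
    Real.negMulLog (μ (⋂ s : ↥F, (fun x => (s : G) • x) ⁻¹' P (f s))).toReal

/-- `P` is a finite measurable partition of `X` (members may be empty). -/
def IsMeasPartition {X : Type*} [MeasurableSpace X] {k : ℕ} (P : Fin k → Set X) : Prop :=
  (∀ i, MeasurableSet (P i)) ∧ (Pairwise fun i j => Disjoint (P i) (P j)) ∧
    (⋃ i, P i) = Set.univ

/-- `x` is a (topological) IE-tuple for the action of `G` on `X`. -/
def IsIETuple (G : Type*) {X : Type*} [Group G] [TopologicalSpace X] [MulAction G X]
    {k : ℕ} (x : Fin k → X) : Prop :=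
  ∀ U : Fin k → Set X, (∀ i, U i ∈ nhds (x i)) →
    ∃ d : ℝ, 0 < d ∧ ∀ (K : Finset G) (δ : ℝ), 0 < δ →
      ∃ (F : Finset G) (J : Set G), FolnerInv K δ F ∧ IndepSet U (Set.univ : Set X) J ∧
        d * (F.card : ℝ) ≤ (((F : Set G)) ∩ J).ncard

/-- `x` is a `μ`-IE-tuple. -/
def IsMuIETuple (G : Type*) {X : Type*} [Group G] [TopologicalSpace X] [MulAction G X]
    [MeasurableSpace X] (μ : Measure X) {k : ℕ} (x : Fin k → X) : Prop :=
  ∀ U : Fin k → Set X, (∀ i, U i ∈ nhds (x i)) → 0 < upperIndepDens G μ U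

/-!
Fix a finite independence set `J` for `A` and choose, for every word `σ` over `J`, a point of `X`
realising it; wherever `σ` uses the letter `i`, the realising point lies in some `B j`, so the word
comes with a colouring of the coordinates where it uses `i`. Averaging over all colourings of `J`
produces one which agrees with at least `(k - 1 + 1 / r) ^ #J` words, where `r` is the number of
colours. By a Sauer–Shelah inequality for words these shatter a subset of `J` of proportional size,
and the most frequent colour on it gives an independence set for one of the refined tuples.
Intersecting the sets `D` that are optimal for the refined tuples turns this into an inequality
between the functions `φ`. As there are finitely many refined tuples, one of them satisfies this
inequality for arbitrarily invariant sets `F`.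
-/

section Words

variable {ι α : Type*}

/-- The family `S` of words over the alphabet `α`, with coordinates in `ι`, shatters the set of
coordinates `I`: every pattern on `I` extends to a member of `S`. For a two-letter alphabet this is
`Finset.Shatters`. -/
def WordShatters (S : Finset (ι → α)) (I : Finset ι) : Prop :=
  ∀ f : ι → α, ∃ s ∈ S, EqOn s f I

variable {S T : Finset (ι → α)} {I I' : Finset ι} {a : ι}

lemma wordShatters_empty (hS : S.Nonempty) : WordShatters S ∅ := fun _ =>
  let ⟨s, hs⟩ := hS
  ⟨s, hs, by simp⟩

lemma WordShatters.mono_right (h : WordShatters S I) (hI : I' ⊆ I) : WordShatters S I' := fun f =>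
  let ⟨s, hs, hsf⟩ := h f
  ⟨s, hs, hsf.mono hI⟩

lemma WordShatters.of_image_update {b : α}
    (h : WordShatters (S.image (Function.update · a b)) I) (ha : a ∉ I) : WordShatters S I := by
  intro f
  obtain ⟨_, hu, huf⟩ := h f
  obtain ⟨s, hs, rfl⟩ := Finset.mem_image.1 hu
  exact ⟨s, hs, fun i hi => by
    rw [← huf hi, Function.update_of_ne (ne_of_mem_of_not_mem hi ha)]⟩

lemma WordShatters.insert_of_forall_update_mem (h : WordShatters T I)
    (hT : ∀ t ∈ T, ∀ l, Function.update t a l ∈ S) : WordShatters S (insert a I) := by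
  intro f
  obtain ⟨t, ht, htf⟩ := h f
  refine ⟨Function.update t a (f a), hT t ht (f a), fun i hi => ?_⟩
  rcases eq_or_ne i a with rfl | hia
  · exact Function.update_self ..
  · rw [Function.update_of_ne hia]
    exact htf (Finset.mem_of_mem_insert_of_ne hi hia)

lemma eqOn_compl_of_mem_image_update {E : Finset ι}
    (hS : ∀ s ∈ S, ∀ s' ∈ S, EqOn s s' ((insert a E : Finset ι) : Set ι)ᶜ) (b : α) :
    ∀ u ∈ S.image (Function.update · a b), ∀ u' ∈ S.image (Function.update · a b),
      EqOn u u' (E : Set ι)ᶜ := by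
  simp only [Finset.forall_mem_image]
  intro s hs s' hs' i hi
  rcases eq_or_ne i a with rfl | hia
  · simp only [Function.update_self]
  · simpa [hia] using hS s hs s' hs' (by simpa [hia] using hi)

variable [Fintype α]

lemma card_filter_update_eq_le (S : Finset (ι → α)) (a : ι) (b : α) (t : ι → α) :
    (S.filter fun s => Function.update s a b = t).card ≤
      (Fintype.card α - 1) + if ∀ l, Function.update t a l ∈ S then 1 else 0 := by
  have hsub : (S.filter fun s => Function.update s a b = t) ⊆
      (Finset.univ.filter fun l => Function.update t a l ∈ S).image (Function.update t a) := by
    intro s hst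
    obtain ⟨hs, rfl⟩ := Finset.mem_filter.1 hst
    exact Finset.mem_image.2 ⟨s a, by simpa using hs, by simp⟩
  refine (Finset.card_le_card hsub).trans (Finset.card_image_le.trans ?_)
  split_ifs with ht
  · rw [Finset.filter_true_of_mem fun l _ => ht l, Finset.card_univ]
    omega
  · obtain ⟨l, hl⟩ := not_forall.1 ht
    exact Nat.le_sub_one_of_lt (Finset.card_lt_univ_of_notMem (x := l) (by simpa using hl))

lemma card_le_mul_card_image_update_add_card (S : Finset (ι → α)) (a : ι) (b : α) :
    S.card ≤ (Fintype.card α - 1) * (S.image (Function.update · a b)).card +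
      ((S.image (Function.update · a b)).filter fun t => ∀ l, Function.update t a l ∈ S).card := by
  calc S.card
      = ∑ t ∈ S.image (Function.update · a b),
          (S.filter fun s => Function.update s a b = t).card :=
        Finset.card_eq_sum_card_image _ S
    _ ≤ ∑ t ∈ S.image (Function.update · a b),
          ((Fintype.card α - 1) + if ∀ l, Function.update t a l ∈ S then 1 else 0) :=
        Finset.sum_le_sum fun t _ => card_filter_update_eq_le S a b t
    _ = _ := by
        rw [Finset.sum_add_distrib, Finset.sum_const, smul_eq_mul, mul_comm, Finset.sum_boole,
          Nat.cast_id]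

-- Pajor's form of the Sauer–Shelah lemma. The words agree off `E`, rather than having
-- coordinates in `E`, so that the induction stays inside a single type of words.
theorem card_le_sum_wordShatters (E : Finset ι) (S : Finset (ι → α))
    (hS : ∀ s ∈ S, ∀ s' ∈ S, EqOn s s' (E : Set ι)ᶜ) :
    S.card ≤ ∑ I ∈ E.powerset with WordShatters S I,
      (Fintype.card α - 1) ^ (E.card - I.card) := by
  induction E using Finset.induction_on generalizing S with
  | empty =>
    rcases S.eq_empty_or_nonempty with rfl | hne
    · simp
    · have hcard : S.card ≤ 1 := Finset.card_le_one.2 fun s hs s' hs' => by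
        simpa using hS s hs s' hs'
      simpa [Finset.filter_singleton, wordShatters_empty hne] using hcard
  | insert a E ha ih =>
    rcases S.eq_empty_or_nonempty with rfl | ⟨s₀, -⟩
    · simp
    set U := S.image (Function.update · a (s₀ a))
    set T := U.filter fun t => ∀ l, Function.update t a l ∈ S
    have hU := eqOn_compl_of_mem_image_update hS (s₀ a)
    have hUle := ih U hU
    have hTle := ih T fun t ht t' ht' =>
      hU t (Finset.mem_of_mem_filter t ht) t' (Finset.mem_of_mem_filter t' ht')
    rw [Finset.sum_filter] at hUle hTle ⊢
    rw [Finset.sum_powerset_insert ha]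
    refine (card_le_mul_card_image_update_add_card S a (s₀ a)).trans (add_le_add ?_ ?_)
    · refine (Nat.mul_le_mul_left _ hUle).trans ?_
      rw [Finset.mul_sum]
      refine Finset.sum_le_sum fun I hI => ?_
      have hIE := Finset.mem_powerset.1 hI
      by_cases hUI : WordShatters U I
      · rw [if_pos hUI, if_pos (hUI.of_image_update fun haI => ha (hIE haI)),
          Finset.card_insert_of_notMem ha, Nat.sub_add_comm (Finset.card_le_card hIE), pow_succ']
      · simp [hUI]
    · refine hTle.trans (Finset.sum_le_sum fun I hI => ?_)
      by_cases hTI : WordShatters T I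
      · have hSI : WordShatters S (insert a I) :=
          hTI.insert_of_forall_update_mem fun t ht => (Finset.mem_filter.1 ht).2
        rw [if_pos hTI, if_pos hSI, Finset.card_insert_of_notMem ha,
          Finset.card_insert_of_notMem fun haI => ha (Finset.mem_powerset.1 hI haI),
          Nat.add_sub_add_right]
      · simp [hTI]

variable [Fintype ι]

lemma card_le_pow_mul_pow_of_wordShatters {t : ℝ} (ht : 1 ≤ t) {m : ℕ}
    (hS : ∀ I, WordShatters S I → I.card ≤ m) :
    (S.card : ℝ) ≤ t ^ m * (((Fintype.card α - 1 : ℕ) : ℝ) + 1 / t) ^ Fintype.card ι := by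
  set q := Fintype.card α - 1
  have : 0 < t := zero_lt_one.trans_le ht
  have hweight : ∀ I, WordShatters S I → 1 ≤ t ^ m * (1 / t) ^ I.card := fun I hI => by
    rw [one_div, inv_pow, ← div_eq_mul_inv, one_le_div (by positivity)]
    exact pow_le_pow_right₀ ht (hS I hI)
  calc (S.card : ℝ)
      ≤ ∑ I : Finset ι with WordShatters S I, (q : ℝ) ^ (Fintype.card ι - I.card) := by
        have h := card_le_sum_wordShatters Finset.univ S (by simp)
        rw [Finset.powerset_univ] at h
        exact_mod_cast h
    _ ≤ ∑ I : Finset ι with WordShatters S I,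
          t ^ m * ((1 / t) ^ I.card * (q : ℝ) ^ (Fintype.card ι - I.card)) := by
        refine Finset.sum_le_sum fun I hI => ?_
        rw [← mul_assoc]
        exact le_mul_of_one_le_left (by positivity) (hweight I (Finset.mem_filter.1 hI).2)
    _ ≤ ∑ I : Finset ι, t ^ m * ((1 / t) ^ I.card * (q : ℝ) ^ (Fintype.card ι - I.card)) :=
        Finset.sum_le_univ_sum_of_nonneg fun I => by positivity
    _ = t ^ m * ((q : ℝ) + 1 / t) ^ Fintype.card ι := by
        rw [← Finset.mul_sum, Fintype.sum_pow_mul_eq_add_pow, add_comm]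

lemma exists_wordShatters_logb_mul_le {t x : ℝ} (ht : 1 < t) (hx : 0 < x)
    (hS : x ^ Fintype.card ι ≤ S.card) :
    ∃ I, WordShatters S I ∧
      Real.logb t (x / (((Fintype.card α - 1 : ℕ) : ℝ) + 1 / t)) * Fintype.card ι ≤ I.card := by
  set y : ℝ := ((Fintype.card α - 1 : ℕ) : ℝ) + 1 / t
  have : 0 < t := zero_lt_one.trans ht
  have hSne : S.Nonempty :=
    Finset.card_pos.1 (by exact_mod_cast (pow_pos hx (Fintype.card ι)).trans_le hS)
  obtain ⟨I, hI, hmax⟩ := Finset.exists_max_image (Finset.univ.filter (WordShatters S)) Finset.card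
    ⟨∅, by simpa using wordShatters_empty hSne⟩
  have hle : x ^ Fintype.card ι ≤ t ^ I.card * y ^ Fintype.card ι :=
    hS.trans (card_le_pow_mul_pow_of_wordShatters ht.le fun I' hI' => hmax I' (by simpa using hI'))
  refine ⟨I, (Finset.mem_filter.1 hI).2, ?_⟩
  calc Real.logb t (x / y) * Fintype.card ι
      = Real.logb t ((x / y) ^ Fintype.card ι) := by rw [Real.logb_pow, mul_comm]
    _ ≤ Real.logb t (t ^ I.card) := by
        refine Real.logb_le_logb_of_le ht (by positivity) ?_
        rw [div_pow, div_le_iff₀ (by positivity)]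
        exact hle
    _ = I.card := by rw [Real.logb_pow, Real.logb_self_eq_one ht, mul_one]

end Words

section Colorings

variable {ι α κ : Type*} [Fintype ι] [Fintype α] [Fintype κ]

lemma card_filter_forall_imp_eq (p : ι → Prop) (c : ι → κ) :
    (Finset.univ.filter fun ε : ι → κ => ∀ i, p i → c i = ε i).card =
      ∏ i, if p i then 1 else Fintype.card κ := by
  have hpi : (Finset.univ.filter fun ε : ι → κ => ∀ i, p i → c i = ε i) =
      Fintype.piFinset fun i => if p i then {c i} else Finset.univ := by
    ext ε
    simp only [Finset.mem_filter, Finset.mem_univ, true_and, Fintype.mem_piFinset]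
    refine forall_congr' fun i => ?_
    by_cases hi : p i <;> simp [hi, eq_comm]
  rw [hpi, Fintype.card_piFinset]
  exact Finset.prod_congr rfl fun i _ => by split_ifs <;> simp

lemma sum_card_filter_forall_eq_imp_eq (a : α) (c : (ι → α) → ι → κ) :
    ∑ ε : ι → κ, (Finset.univ.filter fun σ : ι → α => ∀ i, σ i = a → c σ i = ε i).card =
      (1 + (Fintype.card α - 1) * Fintype.card κ) ^ Fintype.card ι := by
  have hletter : (∑ l : α, if l = a then 1 else Fintype.card κ) =
      1 + (Fintype.card α - 1) * Fintype.card κ := by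
    rw [← Finset.add_sum_erase _ _ (Finset.mem_univ a), if_pos rfl,
      Finset.sum_congr rfl fun l hl => if_neg (Finset.ne_of_mem_erase hl)]
    simp
  calc ∑ ε : ι → κ, (Finset.univ.filter fun σ : ι → α => ∀ i, σ i = a → c σ i = ε i).card
      = ∑ σ : ι → α, (Finset.univ.filter fun ε : ι → κ => ∀ i, σ i = a → c σ i = ε i).card :=
        Finset.sum_card_bipartiteAbove_eq_sum_card_bipartiteBelow _
    _ = ∑ σ : ι → α, ∏ i, if σ i = a then 1 else Fintype.card κ :=
        Finset.sum_congr rfl fun σ _ => card_filter_forall_imp_eq _ _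
    _ = ∏ _i : ι, ∑ l : α, if l = a then 1 else Fintype.card κ := by
        rw [Finset.prod_univ_sum, Fintype.piFinset_univ]
    _ = _ := by rw [hletter, Finset.prod_const, Finset.card_univ]

variable [Nonempty κ]

lemma exists_coloring_pow_le_card (a : α) (c : (ι → α) → ι → κ) :
    ∃ ε : ι → κ, (((Fintype.card α - 1 : ℕ) : ℝ) + 1 / Fintype.card κ) ^ Fintype.card ι ≤
      (Finset.univ.filter fun σ : ι → α => ∀ i, σ i = a → c σ i = ε i).card := by
  have hκ : (Fintype.card κ : ℝ) ≠ 0 := by exact_mod_cast Fintype.card_ne_zero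
  suffices h : ∑ _ε : ι → κ,
      (((Fintype.card α - 1 : ℕ) : ℝ) + 1 / Fintype.card κ) ^ Fintype.card ι ≤
      ∑ ε : ι → κ,
        ((Finset.univ.filter fun σ : ι → α => ∀ i, σ i = a → c σ i = ε i).card : ℝ) by
    obtain ⟨ε, -, hε⟩ := Finset.exists_le_of_sum_le Finset.univ_nonempty h
    exact ⟨ε, hε⟩
  rw [← Nat.cast_sum, sum_card_filter_forall_eq_imp_eq, Finset.sum_const, Finset.card_univ,
    Fintype.card_fun, nsmul_eq_mul]
  push_cast
  rw [← mul_pow, mul_add, mul_one_div_cancel hκ, add_comm, mul_comm]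

/-- The proportion of the coordinates on which words over `q + 1` letters remain free once the
occurrences of one letter are required to carry a single one of `r` colours. It is the exponential
gap between `q + 1 / r` and the Sauer–Shelah base `q + 1 / t` for the choice `t = 2 * r`, divided by
the number of colours. -/
noncomputable def splitRate (q r : ℕ) : ℝ :=
  Real.logb (2 * r) ((q + 1 / r) / (q + 1 / (2 * r))) / r

lemma splitRate_pos (q : ℕ) {r : ℕ} (hr : 0 < r) : 0 < splitRate q r := by
  have hr₁ : (1 : ℝ) ≤ r := by exact_mod_cast hr
  refine div_pos (Real.logb_pos (by linarith) ?_) (by positivity)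
  rw [one_lt_div (by positivity)]
  gcongr
  linarith

lemma exists_wordShatters_monochromatic (a : α) (c : (ι → α) → ι → κ) :
    ∃ (j : κ) (I : Finset ι),
      splitRate (Fintype.card α - 1) (Fintype.card κ) * Fintype.card ι ≤ I.card ∧
      WordShatters (Finset.univ.filter fun σ => ∀ i ∈ I, σ i = a → c σ i = j) I := by
  have hκ : (1 : ℝ) ≤ Fintype.card κ := by exact_mod_cast Fintype.card_pos (α := κ)
  obtain ⟨ε, hε⟩ := exists_coloring_pow_le_card a c
  obtain ⟨I, hI, hIcard⟩ :=
    exists_wordShatters_logb_mul_le (t := 2 * Fintype.card κ) (by linarith) (by positivity) hε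
  obtain ⟨j, -, hj⟩ := Finset.exists_le_card_fiber_of_nsmul_le_card_of_maps_to
    (s := I) (t := Finset.univ) (f := ε)
    (b := splitRate (Fintype.card α - 1) (Fintype.card κ) * Fintype.card ι)
    (fun _ _ => Finset.mem_univ _) Finset.univ_nonempty (by
      refine le_of_eq_of_le ?_ hIcard
      rw [splitRate, Finset.card_univ, nsmul_eq_mul]
      field_simp)
  refine ⟨j, I.filter (ε · = j), hj, fun f => ?_⟩
  obtain ⟨σ, hσ, hσf⟩ := hI.mono_right (Finset.filter_subset (ε · = j) I) f
  refine ⟨σ, Finset.mem_filter.2 ⟨Finset.mem_univ σ, fun i hi hσi => ?_⟩, hσf⟩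
  rw [(Finset.mem_filter.1 hσ).2 i hσi, (Finset.mem_filter.1 hi).2]

end Colorings

section Independence

variable {G X : Type*} [Group G] [MulAction G X] {k : ℕ} {A : Fin k → Set X} {D : G → Set X}

lemma IndepRel.mono {D' : G → Set X} {J J' : Set G} (h : IndepRel A D J) (hD : ∀ s, D s ⊆ D' s)
    (hJ : J' ⊆ J) : IndepRel A D' J' := fun F hF hne σ =>
  (h F (hF.trans hJ) hne σ).mono <| iInter₂_mono fun s _ => inter_subset_inter_left _ (hD s)

lemma indepRel_empty (A : Fin k → Set X) (D : G → Set X) : IndepRel A D ∅ :=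
  fun _ hF ⟨s, hs⟩ => absurd (hF hs) (notMem_empty s)

lemma IndepRel.nonempty {J : Set G} (h : IndepRel A D J) (hJ : J.Nonempty) (i : Fin k) :
    (A i).Nonempty := by
  obtain ⟨s, hs⟩ := hJ
  obtain ⟨x, hx⟩ := h {s} (by simpa using hs) (Finset.singleton_nonempty s) fun _ => i
  exact ⟨s • x, (mem_iInter₂.1 hx s (Finset.mem_singleton_self s)).2⟩

lemma IndepRel.exists_forall_mem {J : Finset G} (h : IndepRel A D J) (hJ : J.Nonempty)
    (σ : J → Fin k) : ∃ x : X, ∀ s : J, x ∈ D s ∧ (s : G) • x ∈ A (σ s) := by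
  obtain ⟨s₀, hs₀⟩ := hJ
  obtain ⟨x, hx⟩ := h J subset_rfl ⟨s₀, hs₀⟩ (Function.extend Subtype.val σ fun _ => σ ⟨s₀, hs₀⟩)
  refine ⟨x, fun s => ?_⟩
  simpa [Subtype.val_injective.extend_apply] using mem_iInter₂.1 hx s s.2

variable {κ : Type*} [Fintype κ] [Nonempty κ]

lemma IndepRel.exists_subset_update {i : Fin k} {B : κ → Set X} (hA : A i ⊆ ⋃ j, B j)
    {J : Finset G} (hJ : IndepRel A D J) :
    ∃ (j : κ) (J' : Finset G), J' ⊆ J ∧ splitRate (k - 1) (Fintype.card κ) * J.card ≤ J'.card ∧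
      IndepRel (Function.update A i (B j)) D J' := by
  rcases J.eq_empty_or_nonempty with rfl | hne
  · exact ⟨Classical.arbitrary κ, ∅, subset_rfl, by simp, by simpa using indepRel_empty _ D⟩
  choose x hx using hJ.exists_forall_mem hne
  have hcolor : ∀ (σ : J → Fin k) (s : J), ∃ j, σ s = i → (s : G) • x σ ∈ B j := by
    intro σ s
    by_cases hσ : σ s = i
    · obtain ⟨j, hj⟩ := mem_iUnion.1 (hA (hσ ▸ (hx σ s).2))
      exact ⟨j, fun _ => hj⟩
    · exact ⟨Classical.arbitrary κ, fun h => absurd h hσ⟩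
  choose c hc using hcolor
  obtain ⟨j, I, hIcard, hI⟩ := exists_wordShatters_monochromatic i c
  refine ⟨j, I.map (.subtype _), Finset.map_subtype_subset I, by simpa using hIcard, ?_⟩
  intro F hF _ τ
  obtain ⟨σ, hσ, hστ⟩ := hI fun s => τ s
  have hσj : ∀ s ∈ I, σ s = i → c σ s = j := by simpa using hσ
  refine ⟨x σ, mem_iInter₂.2 fun s hs => ?_⟩
  obtain ⟨s, hsI, rfl⟩ := Finset.mem_map.1 (hF hs)
  refine ⟨(hx σ s).1, ?_⟩
  have hτs : τ s = σ s := (hστ hsI).symm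
  change (s : G) • x σ ∈ Function.update A i (B j) (τ s)
  by_cases hi : σ s = i
  · rw [hτs, hi, Function.update_self, ← hσj s hsI hi]
    exact hc σ s hi
  · rw [hτs, Function.update_of_ne hi]
    exact (hx σ s).2

end Independence

section MaxIndep

variable {G X : Type*} [Group G] [MulAction G X] {k : ℕ}

lemma bddAbove_ncard_inter_indepRel (A : Fin k → Set X) (D : G → Set X) (F : Finset G) :
    BddAbove {m : ℕ | ∃ J : Set G, IndepRel A D J ∧ m = ((F : Set G) ∩ J).ncard} := by
  refine ⟨F.card, ?_⟩
  rintro _ ⟨J, _, rfl⟩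
  rw [← ncard_coe_finset F]
  exact ncard_le_ncard inter_subset_left F.finite_toSet

lemma IndepRel.card_le_maxIndep {A : Fin k → Set X} {D : G → Set X} {F J : Finset G}
    (h : IndepRel A D J) (hJF : J ⊆ F) : J.card ≤ maxIndep A D F := by
  refine le_csSup (bddAbove_ncard_inter_indepRel A D F) ⟨J, h, ?_⟩
  rw [inter_eq_self_of_subset_right (by exact_mod_cast hJF), ncard_coe_finset]

lemma exists_indepRel_card_eq_maxIndep (A : Fin k → Set X) (D : G → Set X) (F : Finset G) :
    ∃ J ⊆ F, IndepRel A D J ∧ J.card = maxIndep A D F := by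
  obtain ⟨J, hJ, hcard⟩ := Nat.sSup_mem
    (s := {m : ℕ | ∃ J : Set G, IndepRel A D J ∧ m = ((F : Set G) ∩ J).ncard})
    ⟨_, ∅, indepRel_empty A D, rfl⟩ (bddAbove_ncard_inter_indepRel A D F)
  have hcoe : ((F.filter (· ∈ J) : Finset G) : Set G) = (F : Set G) ∩ J := Finset.coe_filter ..
  refine ⟨F.filter (· ∈ J), Finset.filter_subset _ _, ?_, ?_⟩
  · exact hJ.mono (fun _ => subset_rfl) (hcoe ▸ inter_subset_right)
  · rw [← ncard_coe_finset, hcoe]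
    exact hcard.symm

end MaxIndep

lemma one_sub_sum_le_measureReal_iInter {X κ : Type*} [MeasurableSpace X] [Fintype κ]
    {μ : Measure X} [IsProbabilityMeasure μ] {D : κ → Set X} (hD : ∀ j, MeasurableSet (D j))
    {δ : κ → ℝ} (hδ : ∀ j, 1 - δ j ≤ μ.real (D j)) : 1 - ∑ j, δ j ≤ μ.real (⋂ j, D j) := by
  have hcompl : μ.real (⋂ j, D j)ᶜ ≤ ∑ j, δ j := by
    rw [compl_iInter]
    refine (measureReal_iUnion_fintype_le _).trans (Finset.sum_le_sum fun j _ => ?_)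
    rw [probReal_compl_eq_one_sub (hD j)]
    linarith [hδ j]
  rw [probReal_compl_eq_one_sub (.iInter hD)] at hcompl
  linarith

section PhiConst

variable {G X : Type*} [Group G] [MulAction G X] [MeasurableSpace X] {k : ℕ} {μ : Measure X}

lemma phiConst_le_maxIndep {A : Fin k → Set X} {ε : ℝ} {D : Set X} (hD : MeasurableSet D)
    (hμ : 1 - ε ≤ μ.real D) (F : Finset G) : phiConst μ A ε F ≤ maxIndep A (fun _ => D) F :=
  Nat.sInf_le ⟨D, hD, hμ, rfl⟩

variable [IsProbabilityMeasure μ]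

lemma exists_phiConst_eq_maxIndep (A : Fin k → Set X) {ε : ℝ} (hε : 0 < ε) (F : Finset G) :
    ∃ D : Set X, MeasurableSet D ∧ 1 - ε ≤ μ.real D ∧
      phiConst μ A ε F = maxIndep A (fun _ => D) F :=
  Nat.sInf_mem (s := {m : ℕ | ∃ D : Set X, MeasurableSet D ∧ 1 - ε ≤ (μ D).toReal ∧
    m = maxIndep A (fun _ : G => D) F}) ⟨_, univ, .univ, by simp [hε.le], rfl⟩

lemma exists_indepRel_phiConst_eq_card (A : Fin k → Set X) {ε : ℝ} (hε : 0 < ε) (F : Finset G) :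
    ∃ (D : Set X) (J : Finset G), J ⊆ F ∧ IndepRel A (fun _ : G => D) J ∧
      phiConst μ A ε F = J.card := by
  obtain ⟨D, _, _, hD⟩ := exists_phiConst_eq_maxIndep (μ := μ) A hε F
  obtain ⟨J, hJF, hJ, hcard⟩ := exists_indepRel_card_eq_maxIndep A (fun _ => D) F
  exact ⟨D, J, hJF, hJ, hD.trans hcard.symm⟩

lemma phiConst_le_card (A : Fin k → Set X) {ε : ℝ} (hε : 0 < ε) (F : Finset G) :
    phiConst μ A ε F ≤ F.card := by
  obtain ⟨D, J, hJF, -, hJ⟩ := exists_indepRel_phiConst_eq_card (μ := μ) A hε F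
  exact hJ.trans_le (Finset.card_le_card hJF)

lemma exists_splitRate_mul_phiConst_le {κ : Type*} [Fintype κ] [Nonempty κ] {A : Fin k → Set X}
    {i : Fin k} {B : κ → Set X} (hA : A i ⊆ ⋃ j, B j) {ε : ℝ} (hε : 0 < ε) (F : Finset G) :
    ∃ j, splitRate (k - 1) (Fintype.card κ) * phiConst μ A ε F ≤
      phiConst μ (Function.update A i (B j)) (ε / Fintype.card κ) F := by
  have hr : 0 < (Fintype.card κ : ℝ) := by exact_mod_cast Fintype.card_pos
  choose D hDmeas hDμ hD using fun j => exists_phiConst_eq_maxIndep (μ := μ)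
    (Function.update A i (B j)) (div_pos hε hr) F
  have hμ : 1 - ε ≤ μ.real (⋂ j, D j) := by
    simpa [mul_div_cancel₀ _ hr.ne'] using one_sub_sum_le_measureReal_iInter hDmeas hDμ
  obtain ⟨J, hJF, hJ, hJcard⟩ := exists_indepRel_card_eq_maxIndep A (fun _ : G => ⋂ j, D j) F
  obtain ⟨j, J', hJ'J, hcard, hJ'⟩ := hJ.exists_subset_update hA
  refine ⟨j, ?_⟩
  calc splitRate (k - 1) (Fintype.card κ) * phiConst μ A ε F
      ≤ splitRate (k - 1) (Fintype.card κ) * J.card := by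
        rw [hJcard]
        have := (splitRate_pos (k - 1) (Fintype.card_pos (α := κ))).le
        gcongr
        exact phiConst_le_maxIndep (.iInter hDmeas) hμ F
    _ ≤ J'.card := hcard
    _ ≤ phiConst μ (Function.update A i (B j)) (ε / Fintype.card κ) F := by
        rw [hD j]
        exact_mod_cast (hJ'.mono (fun _ => iInter_subset D j) subset_rfl).card_le_maxIndep
          (hJ'J.trans hJF)

end PhiConst

section Limsup

variable {G : Type*} {ψ : Finset G → ℝ}

lemma sSup_image_div_card_nonneg (hψ₀ : ∀ F, 0 ≤ ψ F) (s : Set (Finset G)) :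
    0 ≤ sSup ((fun F : Finset G => ψ F / (F.card : ℝ)) '' s) :=
  Real.sSup_nonneg <| forall_mem_image.2 fun F _ => div_nonneg (hψ₀ F) F.card.cast_nonneg

variable [Group G]

lemma FolnerInv.mono {K K' F : Finset G} {δ δ' : ℝ} (h : FolnerInv K δ F) (hK : K' ⊆ K)
    (hδ : δ ≤ δ') : FolnerInv K' δ' F := by
  refine ⟨h.1, ?_⟩
  have hsub : (F : Set G) ∩ {s | ∀ g ∈ K, g * s ∈ F} ⊆
      (F : Set G) ∩ {s | ∀ g ∈ K', g * s ∈ F} :=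
    inter_subset_inter_right _ fun s hs g hg => hs g (hK hg)
  calc (1 - δ') * (F.card : ℝ) ≤ (1 - δ) * F.card := by gcongr
    _ ≤ ((F : Set G) ∩ {s | ∀ g ∈ K, g * s ∈ F}).ncard := h.2
    _ ≤ ((F : Set G) ∩ {s | ∀ g ∈ K', g * s ∈ F}).ncard := by
        exact_mod_cast ncard_le_ncard hsub (F.finite_toSet.subset inter_subset_left)

/-- The filter on finite subsets of `G` along which they become more and more invariant: it is
generated by the collections of `(K, δ)`-invariant sets with `δ > 0`. -/
def invariantFilter (G : Type*) [Group G] : Filter (Finset G) :=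
  ⨅ (p : Finset G × ℝ) (_ : 0 < p.2), Filter.principal {F | FolnerInv p.1 p.2 F}

lemma hasBasis_invariantFilter : (invariantFilter G).HasBasis
    (fun p : Finset G × ℝ => 0 < p.2) fun p => {F | FolnerInv p.1 p.2 F} := by
  refine Filter.hasBasis_biInf_principal' (fun p hp p' hp' => ?_) ⟨(∅, 1), one_pos⟩
  exact ⟨(p.1 ∪ p'.1, min p.2 p'.2), lt_min hp hp',
    fun F hF => hF.mono Finset.subset_union_left (min_le_left _ _),
    fun F hF => hF.mono Finset.subset_union_right (min_le_right _ _)⟩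

lemma eventually_nonempty_invariantFilter : ∀ᶠ F in invariantFilter G, F.Nonempty :=
  Filter.mem_of_superset (hasBasis_invariantFilter.mem_of_mem (i := (∅, 1)) one_pos)
    fun _ hF => hF.1

lemma invLimsup_le_sSup (hψ₀ : ∀ F, 0 ≤ ψ F) (K : Finset G) (δ : {d : ℝ // 0 < d}) :
    invLimsup ψ ≤
      sSup ((fun F : Finset G => ψ F / (F.card : ℝ)) '' {F | FolnerInv K δ.1 F}) := by
  refine (ciInf_le ⟨0, ?_⟩ K).trans (ciInf_le ⟨0, ?_⟩ δ)
  · exact forall_mem_range.2 fun K => Real.iInf_nonneg fun δ => sSup_image_div_card_nonneg hψ₀ _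
  · exact forall_mem_range.2 fun δ => sSup_image_div_card_nonneg hψ₀ _

lemma invLimsup_le_one (hψ₀ : ∀ F, 0 ≤ ψ F) (hψ : ∀ F, ψ F ≤ F.card) : invLimsup ψ ≤ 1 :=
  (invLimsup_le_sSup hψ₀ ∅ ⟨1, one_pos⟩).trans <| Real.sSup_le
    (forall_mem_image.2 fun F _ => div_le_one_of_le₀ (hψ F) F.card.cast_nonneg) zero_le_one

lemma invLimsup_pos_iff (hamen : FolnerAmenable G) (hψ₀ : ∀ F, 0 ≤ ψ F)
    (hψ : ∀ F, ψ F ≤ F.card) :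
    0 < invLimsup ψ ↔ ∃ d > 0, ∃ᶠ F in invariantFilter G, d * F.card ≤ ψ F := by
  simp only [hasBasis_invariantFilter.frequently_iff, Prod.forall, mem_ofPred_eq]
  constructor
  · intro h
    refine ⟨invLimsup ψ / 2, half_pos h, fun K δ hδ => ?_⟩
    have hlt := (half_lt_self h).trans_le (invLimsup_le_sSup hψ₀ K ⟨δ, hδ⟩)
    obtain ⟨_, ⟨F, hF, rfl⟩, hltF⟩ := exists_lt_of_lt_csSup (.image _ (hamen K δ hδ)) hlt
    have hcard : (0 : ℝ) < F.card := by exact_mod_cast hF.1.card_pos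
    exact ⟨F, hF, ((lt_div_iff₀ hcard).1 hltF).le⟩
  · rintro ⟨d, hd, h⟩
    have : Nonempty {d : ℝ // 0 < d} := ⟨⟨1, one_pos⟩⟩
    refine hd.trans_le (le_ciInf fun K => le_ciInf fun δ => ?_)
    obtain ⟨F, hF, hle⟩ := h K δ.1 δ.2
    have hcard : (0 : ℝ) < F.card := by exact_mod_cast hF.1.card_pos
    exact le_csSup_of_le ⟨1, forall_mem_image.2 fun F _ =>
      div_le_one_of_le₀ (hψ F) F.card.cast_nonneg⟩ ⟨F, hF, rfl⟩ ((le_div_iff₀ hcard).2 hle)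

end Limsup

section UpperIndepDens

variable {G X : Type*} [Group G] [MulAction G X] [MeasurableSpace X] {μ : Measure X}
  [IsProbabilityMeasure μ] {k : ℕ} {A : Fin k → Set X}

lemma upperIndepDens_pos_iff (hamen : FolnerAmenable G) :
    0 < upperIndepDens G μ A ↔ ∃ ε > 0, ∃ d > (0 : ℝ),
      ∃ᶠ F in invariantFilter G, d * F.card ≤ phiConst μ A ε F := by
  have hle (ε : {d : ℝ // 0 < d}) (F : Finset G) : (phiConst μ A ε.1 F : ℝ) ≤ F.card := by
    exact_mod_cast phiConst_le_card A ε.2 F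
  have hnn (ε : {d : ℝ // 0 < d}) (F : Finset G) : (0 : ℝ) ≤ phiConst μ A ε.1 F :=
    Nat.cast_nonneg _
  constructor
  · intro h
    have : Nonempty {d : ℝ // 0 < d} := ⟨⟨1, one_pos⟩⟩
    obtain ⟨ε, hε⟩ := exists_lt_of_lt_ciSup h
    exact ⟨ε.1, ε.2, (invLimsup_pos_iff hamen (hnn ε) (hle ε)).1 hε⟩
  · rintro ⟨ε, hε, h⟩
    exact ((invLimsup_pos_iff hamen (hnn ⟨ε, hε⟩) (hle ⟨ε, hε⟩)).2 h).trans_le <|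
      le_ciSup (f := fun ε : {d : ℝ // 0 < d} => invLimsup fun F => (phiConst μ A ε.1 F : ℝ))
        ⟨1, forall_mem_range.2 fun ε => invLimsup_le_one (hnn ε) (hle ε)⟩ ⟨ε, hε⟩

lemma nonempty_of_upperIndepDens_pos (hamen : FolnerAmenable G)
    (hpos : 0 < upperIndepDens G μ A) (i : Fin k) : (A i).Nonempty := by
  obtain ⟨ε, hε, d, hd, h⟩ := (upperIndepDens_pos_iff hamen).1 hpos
  obtain ⟨F, hφ, hF⟩ := (h.and_eventually eventually_nonempty_invariantFilter).exists
  obtain ⟨D, J, -, hJ, hcard⟩ := exists_indepRel_phiConst_eq_card (μ := μ) A hε F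
  have hFcard : (0 : ℝ) < F.card := by exact_mod_cast hF.card_pos
  have hJcard : (0 : ℝ) < J.card := hcard ▸ (mul_pos hd hFcard).trans_le hφ
  exact hJ.nonempty (Finset.card_pos.1 (by exact_mod_cast hJcard)) i

theorem stmt2_general {κ : Type*} [Finite κ] (hamen : FolnerAmenable G) {i : Fin k}
    {B : κ → Set X} (hA : A i ⊆ ⋃ j, B j) (hpos : 0 < upperIndepDens G μ A) :
    ∃ j, 0 < upperIndepDens G μ (Function.update A i (B j)) := by
  cases nonempty_fintype κ
  obtain ⟨x, hx⟩ := nonempty_of_upperIndepDens_pos hamen hpos i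
  have : Nonempty κ := (mem_iUnion.1 (hA hx)).nonempty
  have hr : 0 < Fintype.card κ := Fintype.card_pos
  have hrate := splitRate_pos (k - 1) hr
  obtain ⟨ε, hε, d, hd, h⟩ := (upperIndepDens_pos_iff hamen).1 hpos
  have hfreq : ∃ᶠ F in invariantFilter G, ∃ j, splitRate (k - 1) (Fintype.card κ) * d * F.card ≤
      phiConst μ (Function.update A i (B j)) (ε / Fintype.card κ) F := h.mono fun F hF => by
    obtain ⟨j, hj⟩ := exists_splitRate_mul_phiConst_le (μ := μ) hA hε F
    refine ⟨j, le_trans ?_ hj⟩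
    rw [mul_assoc]
    gcongr
  obtain ⟨j, hj⟩ := Filter.frequently_exists.1 hfreq
  exact ⟨j, (upperIndepDens_pos_iff hamen).2
    ⟨ε / Fintype.card κ, by positivity, _, mul_pos hrate hd, hj⟩⟩

end UpperIndepDens

/-- Lemma: if the tuple `A` (with `A 0 = B ∪ C`) has positive upper `μ`-independence
density, then so does one of the tuples obtained by replacing `A 0` with `B` or `C`. -/
theorem stmt2 {G X : Type*} [Group G] [TopologicalSpace X] [CompactSpace X] [T2Space X]
    [MulAction G X] [ContinuousConstSMul G X] [MeasurableSpace X] [BorelSpace X]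
    (hamen : FolnerAmenable G)
    (μ : Measure X) [IsProbabilityMeasure μ] (hinv : InvariantMeasure G μ)
    (k : ℕ) (A : Fin (k + 1) → Set X) (B C : Set X) (hA : A 0 = B ∪ C)
    (hpos : 0 < upperIndepDens G μ A) :
    0 < upperIndepDens G μ (Function.update A 0 B) ∨
      0 < upperIndepDens G μ (Function.update A 0 C) := by
  have hcover : A 0 ⊆ ⋃ b : Bool, cond b B C := by rw [hA, union_eq_iUnion]
  simpa [or_comm] using stmt2_general hamen hcover hpos
end

section
/- For every d > 0 there exist δ > 0, c > 0, and M > 0 such that if F is a finite subset of G with |F| ≥ M, D ∈ ℬ'(μ,δ), 𝒫 = {P_1, P_2} is a two-element Borel partition of X with H_μ(𝒫^F)/|F| ≥ d, and A_1 ⊆ P_1 and A_2 ⊆ P_2 are Borel sets with μ(P_1 ∖ A_1) < δ and μ(P_2 ∖ A_2) < δ, then the pair (A_1, A_2) has an independence set I ⊆ F relative to D with |I| ≥ c|F|. -/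
open MeasureTheory Set
open scoped Classical ENNReal

/-!
Reading off the times `s ∈ F` with `s • x ∈ P₁` turns each point `x` into a word, that is, a
subset of `F`, and `H_μ(𝒫^F)` is the entropy of this random word. Call `s` an error of `x` if
`x ∉ D s` or `s • x ∉ A₁ ∪ A₂`. By Markov's inequality most points have at most `c |F|` errors.
If no set of more than `c |F|` times is shattered by error-free words, then for each fixed error
set the Sauer–Shelah lemma bounds the number of words off the errors. Restoring the letters at
the errors, the words of the good points number at most the cube of the number of subsets of `F`
of size at most `c |F|`. This is `exp (ε |F|)` with `ε` small, whereas the remaining points have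
too little mass to raise the entropy to `d |F|`.
-/

section SmallSubsets

variable {α : Type*}

/-- The family of subsets of `F` of cardinality at most `m`; both the error sets and the shattered
sets of the argument are counted by it. -/
noncomputable def smallSubsets (F : Finset α) (m : ℝ) : Finset (Finset α) :=
  F.powerset.filter fun S => (S.card : ℝ) ≤ m

theorem mem_smallSubsets {F S : Finset α} {m : ℝ} :
    S ∈ smallSubsets F m ↔ S ⊆ F ∧ (S.card : ℝ) ≤ m := by
  rw [smallSubsets, Finset.mem_filter, Finset.mem_powerset]

-- Chernoff's trick: weight each subset `S` by `exp (u * (m - |S|))`, which is at least `1` if `S`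
-- is small.
theorem card_smallSubsets_le_exp_add (F : Finset α) (m : ℝ) {u : ℝ} (hu : 0 ≤ u) :
    ((smallSubsets F m).card : ℝ) ≤ Real.exp (u * m + Real.exp (-u) * F.card) := by
  have one_le_weight (S : Finset α) (hS : S ∈ smallSubsets F m) :
      1 ≤ Real.exp (u * m) * Real.exp (-u) ^ S.card := by
    rw [← Real.exp_nat_mul, ← Real.exp_add, Real.one_le_exp_iff]
    linarith [mul_le_mul_of_nonneg_left (mem_smallSubsets.mp hS).2 hu]
  calc ((smallSubsets F m).card : ℝ) = ∑ _S ∈ smallSubsets F m, (1 : ℝ) := by simp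
    _ ≤ ∑ S ∈ smallSubsets F m, Real.exp (u * m) * Real.exp (-u) ^ S.card :=
      Finset.sum_le_sum one_le_weight
    _ ≤ ∑ S ∈ F.powerset, Real.exp (u * m) * Real.exp (-u) ^ S.card :=
      Finset.sum_le_sum_of_subset_of_nonneg (Finset.filter_subset _ _) fun _ _ _ => by positivity
    _ = Real.exp (u * m) * (Real.exp (-u) + 1) ^ F.card := by
      rw [← Finset.mul_sum, ← Finset.sum_pow_mul_eq_add_pow]
      simp only [one_pow, mul_one]
    _ ≤ Real.exp (u * m) * Real.exp (Real.exp (-u)) ^ F.card := by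
      gcongr
      exact Real.add_one_le_exp _
    _ = Real.exp (u * m + Real.exp (-u) * F.card) := by
      rw [← Real.exp_nat_mul, ← Real.exp_add, mul_comm (F.card : ℝ)]

theorem card_smallSubsets_le_exp (F : Finset α) {η : ℝ} (hη : 0 < η) :
    ((smallSubsets F (η ^ 2 / 4 * F.card)).card : ℝ) ≤ Real.exp (η * F.card) := by
  have exp_le : Real.exp (-(2 / η)) ≤ η / 2 := by
    rw [Real.exp_neg, ← inv_div 2 η]
    exact inv_anti₀ (by positivity) (by linarith [Real.add_one_le_exp (2 / η)])
  calc ((smallSubsets F (η ^ 2 / 4 * F.card)).card : ℝ)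
      ≤ Real.exp (2 / η * (η ^ 2 / 4 * F.card) + Real.exp (-(2 / η)) * F.card) :=
        card_smallSubsets_le_exp_add F _ (by positivity)
    _ ≤ Real.exp (2 / η * (η ^ 2 / 4 * F.card) + η / 2 * F.card) := by gcongr
    _ = Real.exp (η * F.card) := by
      congr 1
      field_simp
      ring

end SmallSubsets

section Shattering

open scoped FinsetFamily

variable {α X : Type*} {P E : α → Set X} {F : Finset α}

/-- The set of times `s ∈ F` at which the point `x` lies in `P s`. For `P s = s⁻¹P₁` this is the
word (itinerary) of `x` over `F`, encoded as a finite set; for the exceptional sets it is the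
error set of `x`. -/
noncomputable def visitTimes (P : α → Set X) (F : Finset α) (x : X) : Finset α :=
  F.filter fun s => x ∈ P s

theorem mem_visitTimes {x : X} {s : α} : s ∈ visitTimes P F x ↔ s ∈ F ∧ x ∈ P s :=
  Finset.mem_filter

theorem visitTimes_subset (P : α → Set X) (F : Finset α) (x : X) : visitTimes P F x ⊆ F :=
  Finset.filter_subset _ _

theorem visitTimes_eq_iff {T : Finset α} (hT : T ⊆ F) {x : X} :
    visitTimes P F x = T ↔ ∀ s ∈ F, (x ∈ P s ↔ s ∈ T) := by
  simp only [Finset.ext_iff, mem_visitTimes]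
  exact forall_congr' fun s => ⟨fun h hs => by rw [← h, and_iff_right hs],
    fun h => ⟨fun hs => (h hs.1).mp hs.2, fun hs => ⟨hT hs, (h (hT hs)).mpr hs⟩⟩⟩

/-- `I` is *shattered* by the sets `P s` off the exceptional sets `E s`: every pattern `T ⊆ I` is
realised by a point that avoids `E s` for all `s ∈ I`. Equivalently, the pairs
`(P s \ E s, (P s)ᶜ \ E s)` are independent along `I`. -/
def ShattersOff (P E : α → Set X) (I : Finset α) : Prop :=
  ∀ T ⊆ I, ∃ x, ∀ s ∈ I, x ∉ E s ∧ (x ∈ P s ↔ s ∈ T)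

/-- The words over `F` of the points with error set `b`, restricted to the complement of `b`. -/
noncomputable def cleanWords (P E : α → Set X) (F b : Finset α) : Finset (Finset α) :=
  F.powerset.filter fun T => ∃ x, visitTimes E F x = b ∧ visitTimes P F x \ b = T

theorem mem_cleanWords_visitTimes (P E : α → Set X) (F : Finset α) (x : X) :
    visitTimes P F x \ visitTimes E F x ∈ cleanWords P E F (visitTimes E F x) :=
  Finset.mem_filter.mpr ⟨Finset.mem_powerset.mpr
    (Finset.sdiff_subset.trans (visitTimes_subset P F x)), x, rfl, rfl⟩

-- A shattered set is contained in a clean word, so it is disjoint from the errors `b`.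
theorem shattersOff_of_shatters_cleanWords {b I : Finset α}
    (hI : (cleanWords P E F b).Shatters I) : I ⊆ F ∧ ShattersOff P E I := by
  obtain ⟨a, ha, hIa⟩ := hI.exists_superset
  obtain ⟨haF, y, -, rfl⟩ := Finset.mem_filter.mp ha
  have hIF : I ⊆ F := hIa.trans (Finset.mem_powerset.mp haF)
  have notMem_b {s : α} (hs : s ∈ I) : s ∉ b := (Finset.mem_sdiff.mp (hIa hs)).2
  refine ⟨hIF, fun T hT => ?_⟩
  obtain ⟨v, hv, rfl⟩ := hI hT
  obtain ⟨-, x, rfl, rfl⟩ := Finset.mem_filter.mp hv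
  refine ⟨x, fun s hs => ⟨fun hxE => notMem_b hs (mem_visitTimes.mpr ⟨hIF hs, hxE⟩), ?_⟩⟩
  rw [Finset.mem_inter, Finset.mem_sdiff, mem_visitTimes, and_iff_right hs, and_iff_right (hIF hs),
    and_iff_left (notMem_b hs)]

theorem card_cleanWords_le_card_smallSubsets {m : ℝ}
    (hI : ∀ I ⊆ F, ShattersOff P E I → (I.card : ℝ) ≤ m) (b : Finset α) :
    (cleanWords P E F b).card ≤ (smallSubsets F m).card :=
  (Finset.card_le_card_shatterer _).trans <| Finset.card_le_card fun I hIs =>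
    have ⟨hIF, hIS⟩ := shattersOff_of_shatters_cleanWords (Finset.mem_shatterer.mp hIs)
    mem_smallSubsets.mpr ⟨hIF, hI I hIF hIS⟩

/-- The words over `F` of the points with at most `m` errors. -/
noncomputable def goodWords (P E : α → Set X) (F : Finset α) (m : ℝ) : Finset (Finset α) :=
  F.powerset.filter fun T => ∃ x, ((visitTimes E F x).card : ℝ) ≤ m ∧ visitTimes P F x = T

theorem goodWords_subset_biUnion_cleanWords_sups (P E : α → Set X) (F : Finset α) (m : ℝ) :
    goodWords P E F m ⊆
      (smallSubsets F m).biUnion fun b => cleanWords P E F b ⊻ smallSubsets F m := by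
  intro T hT
  obtain ⟨-, x, hx, rfl⟩ := Finset.mem_filter.mp hT
  have word_inter_errors_small :
      visitTimes P F x ∩ visitTimes E F x ∈ smallSubsets F m :=
    mem_smallSubsets.mpr ⟨Finset.inter_subset_left.trans (visitTimes_subset P F x),
      le_trans (by exact_mod_cast Finset.card_le_card Finset.inter_subset_right) hx⟩
  exact Finset.mem_biUnion.mpr ⟨visitTimes E F x,
    mem_smallSubsets.mpr ⟨visitTimes_subset E F x, hx⟩,
    Finset.mem_sups.mpr ⟨_, mem_cleanWords_visitTimes P E F x, _, word_inter_errors_small,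
      Finset.sdiff_union_inter _ _⟩⟩

theorem card_goodWords_le_pow_three {m : ℝ}
    (hI : ∀ I ⊆ F, ShattersOff P E I → (I.card : ℝ) ≤ m) :
    (goodWords P E F m).card ≤ (smallSubsets F m).card ^ 3 :=
  calc (goodWords P E F m).card
      ≤ (smallSubsets F m).card * ((smallSubsets F m).card * (smallSubsets F m).card) :=
        (Finset.card_le_card (goodWords_subset_biUnion_cleanWords_sups P E F m)).trans <|
          Finset.card_biUnion_le_card_mul _ _ _ fun b _ => (Finset.card_sups_le _ _).trans <|
            Nat.mul_le_mul_right _ (card_cleanWords_le_card_smallSubsets hI b)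
    _ = (smallSubsets F m).card ^ 3 := by ring

end Shattering

section Entropy

-- The right-hand side is the tangent line of the concave function `negMulLog` at `exp (-L)`.
theorem negMulLog_le_mul_add_exp_neg {p : ℝ} (hp : 0 ≤ p) (L : ℝ) :
    Real.negMulLog p ≤ p * L + Real.exp (-L) := by
  rcases hp.eq_or_lt with rfl | hp
  · simpa using (Real.exp_pos _).le
  · have h := Real.add_one_le_exp (-L - Real.log p)
    rw [Real.exp_sub, Real.exp_log hp, le_div_iff₀ hp] at h
    rw [Real.negMulLog]
    linarith

theorem sum_negMulLog_le_sum_mul_add_one {ι : Type*} {S : Finset ι} {p : ι → ℝ} {L : ℝ}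
    (hp : ∀ i ∈ S, 0 ≤ p i) (hS : (S.card : ℝ) ≤ Real.exp L) :
    ∑ i ∈ S, Real.negMulLog (p i) ≤ (∑ i ∈ S, p i) * L + 1 :=
  calc ∑ i ∈ S, Real.negMulLog (p i) ≤ ∑ i ∈ S, (p i * L + Real.exp (-L)) :=
        Finset.sum_le_sum fun i hi => negMulLog_le_mul_add_exp_neg (hp i hi) L
    _ = (∑ i ∈ S, p i) * L + S.card * Real.exp (-L) := by
      rw [Finset.sum_add_distrib, ← Finset.sum_mul, Finset.sum_const, nsmul_eq_mul]
    _ ≤ (∑ i ∈ S, p i) * L + Real.exp L * Real.exp (-L) := by gcongr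
    _ = (∑ i ∈ S, p i) * L + 1 := by rw [← Real.exp_add, add_neg_cancel, Real.exp_zero]

variable {α X β : Type*} [MeasurableSpace X] {μ : Measure X}

theorem sum_negMulLog_measureReal_fiber_le [IsProbabilityMeasure μ] {w : X → β} {S : Finset β}
    (hw : ∀ b ∈ S, MeasurableSet (w ⁻¹' {b})) {Y : Set X} {ε L : ℝ} (hY : μ.real Yᶜ ≤ ε)
    (hL : 0 ≤ L) (hcard : ((S.filter fun b => ∃ x ∈ Y, w x = b).card : ℝ) ≤ Real.exp L) :
    ∑ b ∈ S, Real.negMulLog (μ.real (w ⁻¹' {b})) ≤ L + ε * Real.log S.card + 2 := by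
  have entropy_le {T : Finset β} (hT : T ⊆ S) {K : ℝ} (hK : (T.card : ℝ) ≤ Real.exp K) :
      ∑ b ∈ T, Real.negMulLog (μ.real (w ⁻¹' {b})) ≤ μ.real (w ⁻¹' T) * K + 1 := by
    rw [← sum_measureReal_preimage_singleton T fun b hb => hw b (hT hb)]
    exact sum_negMulLog_le_sum_mul_add_one (fun _ _ => measureReal_nonneg) hK
  set good := S.filter fun b => ∃ x ∈ Y, w x = b
  set bad := S.filter fun b => ¬ ∃ x ∈ Y, w x = b
  have hgood := entropy_le (Finset.filter_subset _ S : good ⊆ S) hcard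
  have hbad := entropy_le (Finset.filter_subset _ S : bad ⊆ S) (K := Real.log S.card)
    ((Nat.cast_le.mpr (Finset.card_le_card (Finset.filter_subset _ S))).trans (Real.le_exp_log _))
  have good_mass : μ.real (w ⁻¹' good) * L ≤ L := mul_le_of_le_one_left hL measureReal_le_one
  have bad_mass : μ.real (w ⁻¹' bad) ≤ ε :=
    have preimage_subset : w ⁻¹' bad ⊆ Yᶜ := fun x hx hxY =>
      (Finset.mem_filter.mp hx).2 ⟨x, hxY, rfl⟩
    (measureReal_mono preimage_subset).trans hY
  have bad_le := mul_le_mul_of_nonneg_right bad_mass (Real.log_natCast_nonneg S.card)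
  rw [← Finset.sum_filter_add_sum_filter_not S fun b => ∃ x ∈ Y, w x = b]
  linarith

theorem mul_measureReal_card_visitTimes_ge_le_sum [IsFiniteMeasure μ] {E : α → Set X}
    (hE : ∀ s, MeasurableSet (E s)) (F : Finset α) (m : ℝ) :
    m * μ.real {x | m ≤ (visitTimes E F x).card} ≤ ∑ s ∈ F, μ.real (E s) := by
  have card_eq_sum (x : X) :
      ((visitTimes E F x).card : ℝ) = ∑ s ∈ F, (E s).indicator (fun _ => (1 : ℝ)) x := by
    simp [visitTimes, indicator_apply]
  have integrable_indicator (s : α) : Integrable ((E s).indicator fun _ => (1 : ℝ)) μ :=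
    (integrable_const _).indicator (hE s)
  calc m * μ.real {x | m ≤ (visitTimes E F x).card}
      ≤ ∫ x, ((visitTimes E F x).card : ℝ) ∂μ := by
        refine mul_meas_ge_le_integral_of_nonneg
          (Filter.Eventually.of_forall fun _ => Nat.cast_nonneg _) ?_ m
        simp only [card_eq_sum]
        exact integrable_finsetSum _ fun s _ => integrable_indicator s
    _ = ∑ s ∈ F, μ.real (E s) := by
      simp only [card_eq_sum]
      rw [integral_finsetSum _ fun s _ => integrable_indicator s]
      simp only [integral_indicator_const _ (hE _), smul_eq_mul, mul_one]

theorem measurableSet_visitTimes_fiber {P : α → Set X} (hP : ∀ s, MeasurableSet (P s))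
    {F T : Finset α} (hT : T ⊆ F) : MeasurableSet (visitTimes P F ⁻¹' {T}) := by
  have fiber_eq : visitTimes P F ⁻¹' {T} = ⋂ s ∈ F, {x | x ∈ P s ↔ s ∈ T} := by
    ext x
    simp only [mem_preimage, mem_singleton_iff, visitTimes_eq_iff hT, mem_iInter, mem_ofPred_eq]
  rw [fiber_eq]
  exact Finset.measurableSet_biInter F fun s _ => (hP s).iff (.const _)

/-- The entropy of the join of the two-set partitions `{P s, (P s)ᶜ}`, `s ∈ F`: the atoms of the
join are the fibers of the word map `visitTimes P F` over the subsets `T` of `F`, the empty ones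
contributing nothing. -/
noncomputable def visitEntropy (μ : Measure X) (P : α → Set X) (F : Finset α) : ℝ :=
  ∑ T ∈ F.powerset, Real.negMulLog (μ.real (visitTimes P F ⁻¹' {T}))

theorem visitEntropy_le [IsProbabilityMeasure μ] {P E : α → Set X}
    (hP : ∀ s, MeasurableSet (P s)) {F : Finset α} {m ε L : ℝ}
    (hm : μ.real {x | m ≤ (visitTimes E F x).card} ≤ ε) (hL : 0 ≤ L)
    (hcard : ((goodWords P E F m).card : ℝ) ≤ Real.exp L) :
    visitEntropy μ P F ≤ L + ε * (F.card * Real.log 2) + 2 := by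
  have compl_subset : {x | ((visitTimes E F x).card : ℝ) ≤ m}ᶜ ⊆
      {x | m ≤ (visitTimes E F x).card} := by
    intro x hx
    rw [mem_compl_iff, mem_ofPred_eq, not_le] at hx
    exact hx.le
  have log_card_powerset : Real.log F.powerset.card = F.card * Real.log 2 := by
    rw [Finset.card_powerset, Nat.cast_pow, Real.log_pow, Nat.cast_ofNat]
  rw [← log_card_powerset]
  exact sum_negMulLog_measureReal_fiber_le
    (fun _ hT => measurableSet_visitTimes_fiber hP (Finset.mem_powerset.mp hT))
    ((measureReal_mono compl_subset).trans hm) hL hcard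

-- `d ^ 2 / 64 = (d / 4) ^ 2 / 4` bounds the number of small subsets by `exp (d / 4 * |F|)`, whose
-- cube leaves a quarter of the entropy unaccounted for. The rest is shared by the points with many
-- errors, of mass at most `(d ^ 3 / 512) / (d ^ 2 / 64) = d / 8`, and the term `2 ≤ d / 8 * |F|`.
theorem exists_shattersOff_of_le_visitEntropy [IsProbabilityMeasure μ] {P E : α → Set X}
    (hP : ∀ s, MeasurableSet (P s)) (hE : ∀ s, MeasurableSet (E s)) {d : ℝ} (hd : 0 < d)
    (hEμ : ∀ s, μ.real (E s) ≤ d ^ 3 / 512) {F : Finset α} (hF : 16 / d ≤ F.card)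
    (hH : d * F.card ≤ visitEntropy μ P F) :
    ∃ I ⊆ F, d ^ 2 / 64 * F.card ≤ I.card ∧ ShattersOff P E I := by
  by_contra! hno
  have hn : (0 : ℝ) < F.card := lt_of_lt_of_le (by positivity) hF
  have many_errors : μ.real {x | d ^ 2 / 64 * F.card ≤ (visitTimes E F x).card} ≤ d / 8 := by
    have sum_le : ∑ s ∈ F, μ.real (E s) ≤ d ^ 2 / 64 * F.card * (d / 8) :=
      (Finset.sum_le_card_nsmul F _ _ fun s _ => hEμ s).trans_eq (by rw [nsmul_eq_mul]; ring)
    exact le_of_mul_le_mul_left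
      ((mul_measureReal_card_visitTimes_ge_le_sum hE F _).trans sum_le) (by positivity)
  have few_words :
      ((goodWords P E F (d ^ 2 / 64 * F.card)).card : ℝ) ≤ Real.exp (3 * (d / 4 * F.card)) :=
    calc ((goodWords P E F (d ^ 2 / 64 * F.card)).card : ℝ)
        ≤ ((smallSubsets F (d ^ 2 / 64 * F.card)).card : ℝ) ^ 3 := by
          exact_mod_cast card_goodWords_le_pow_three fun I hIF hI =>
            (not_le.mp fun hc => hno I hIF hc hI).le
      _ ≤ Real.exp (d / 4 * F.card) ^ 3 := by
        gcongr
        rw [show d ^ 2 / 64 = (d / 4) ^ 2 / 4 by ring]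
        exact card_smallSubsets_le_exp F (by positivity)
      _ = Real.exp (3 * (d / 4 * F.card)) := by rw [← Real.exp_nat_mul, Nat.cast_ofNat]
  have entropy_le := visitEntropy_le hP many_errors (by positivity) few_words
  have log_two_lt : d / 8 * (F.card * Real.log 2) < d / 8 * F.card := by
    gcongr
    exact mul_lt_of_lt_one_right hn (Real.log_two_lt_d9.trans (by norm_num))
  rw [div_le_iff₀ hd] at hF
  linarith

end Entropy

section Dynamics

variable {G X : Type*} [Group G] [MulAction G X]

theorem ShattersOff.indepRel {P A₁ A₂ : Set X} {D : G → Set X} {I : Finset G}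
    (h₁ : A₁ ⊆ P) (h₂ : Disjoint P A₂)
    (hI : ShattersOff (fun s : G => (fun x => s • x) ⁻¹' P)
      (fun s => (D s ∩ (fun x => s • x) ⁻¹' (A₁ ∪ A₂))ᶜ) I) :
    IndepRel ![A₁, A₂] D (I : Set G) := by
  intro J hJI _ σ
  obtain ⟨x, hx⟩ := hI (I.filter fun s => σ s = 0) (Finset.filter_subset _ _)
  refine ⟨x, mem_iInter₂.mpr fun s hs => ?_⟩
  obtain ⟨hxE, hxP⟩ := hx s (hJI hs)
  obtain ⟨hxD, hxA⟩ := not_not.mp hxE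
  rw [Finset.mem_filter, and_iff_right (Finset.mem_coe.mp (hJI hs))] at hxP
  refine ⟨hxD, ?_⟩
  rcases Fin.exists_fin_two.mp ⟨σ s, rfl⟩ with hσ | hσ
  · rw [mem_preimage, hσ]
    exact hxA.resolve_right (disjoint_left.mp h₂ (hxP.mpr hσ))
  · rw [mem_preimage, hσ]
    exact hxA.resolve_left fun hxA₁ => absurd (hxP.mp (h₁ hxA₁)) (by simp [hσ])

variable [MeasurableSpace X]

theorem HJoin_pair_compl_eq_visitEntropy (μ : Measure X) (P : Set X) (F : Finset G) :
    HJoin μ ![P, Pᶜ] F = visitEntropy μ (fun s : G => (fun x => s • x) ⁻¹' P) F := by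
  have mem_cell (x : X) (i : Fin 2) : x ∈ ![P, Pᶜ] i ↔ (x ∈ P ↔ i = 0) := by
    fin_cases i <;> simp
  refine Finset.sum_bij' (fun f _ => F.filter fun s => ∃ hs : s ∈ F, f ⟨s, hs⟩ = 0)
    (fun T _ s => if (s : G) ∈ T then 0 else 1)
    (fun f _ => Finset.mem_powerset.mpr (Finset.filter_subset _ _))
    (fun _ _ => Finset.mem_univ _) (fun f _ => ?_) (fun T hT => ?_) (fun f _ => ?_)
  · ext s
    rcases Fin.exists_fin_two.mp ⟨f s, rfl⟩ with h | h <;> simp [h]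
  · ext s
    have hTF : s ∈ T → s ∈ F := fun hs => Finset.mem_powerset.mp hT hs
    simpa using hTF
  · congr 3
    ext x
    rw [mem_preimage, mem_singleton_iff, visitTimes_eq_iff (Finset.filter_subset _ _)]
    simp only [mem_iInter, mem_preimage, mem_cell, Subtype.forall, Finset.mem_filter]
    exact forall₂_congr fun s hs => by simp only [hs, exists_true_left, true_and]

theorem measureReal_compl_inter_preimage_smul_le {μ : Measure X} [IsProbabilityMeasure μ]
    (hinv : InvariantMeasure G μ) (s : G) {D : Set X} (hD : MeasurableSet D)
    {A₁ A₂ P₁ P₂ : Set X} (hA₁ : MeasurableSet A₁) (hA₂ : MeasurableSet A₂)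
    (hunion : P₁ ∪ P₂ = univ) :
    μ.real (D ∩ (fun x => s • x) ⁻¹' (A₁ ∪ A₂))ᶜ ≤
      (1 - μ.real D) + (μ.real (P₁ \ A₁) + μ.real (P₂ \ A₂)) := by
  have compl_subset : (A₁ ∪ A₂)ᶜ ⊆ P₁ \ A₁ ∪ P₂ \ A₂ := fun x hx =>
    have ⟨hx₁, hx₂⟩ := not_or.mp hx
    (hunion.ge (mem_univ x)).imp (⟨·, hx₁⟩) (⟨·, hx₂⟩)
  have preimage_eq : μ.real ((fun x => s • x) ⁻¹' (A₁ ∪ A₂)ᶜ) = μ.real (A₁ ∪ A₂)ᶜ :=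
    congrArg ENNReal.toReal (hinv s _ (hA₁.union hA₂).compl)
  calc μ.real (D ∩ (fun x => s • x) ⁻¹' (A₁ ∪ A₂))ᶜ
      ≤ μ.real Dᶜ + μ.real ((fun x => s • x) ⁻¹' (A₁ ∪ A₂)ᶜ) := by
        rw [compl_inter, ← preimage_compl]
        exact measureReal_union_le _ _
    _ ≤ (1 - μ.real D) + (μ.real (P₁ \ A₁) + μ.real (P₂ \ A₂)) := by
      rw [probReal_compl_eq_one_sub hD, preimage_eq]
      gcongr
      exact (measureReal_mono compl_subset).trans (measureReal_union_le _ _)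

theorem stmt3_general [MeasurableConstSMul G X] (μ : Measure X) [IsProbabilityMeasure μ]
    (hinv : InvariantMeasure G μ) {d : ℝ} (hd : 0 < d) {F : Finset G} (hF : 16 / d ≤ F.card)
    {D : G → Set X} (hD : ∀ s, MeasurableSet (D s)) (hDμ : ∀ s, 1 - d ^ 3 / 1536 ≤ μ.real (D s))
    {P₁ P₂ : Set X} (hP₁ : MeasurableSet P₁) (hdisj : Disjoint P₁ P₂) (hunion : P₁ ∪ P₂ = univ)
    (hH : d ≤ HJoin μ ![P₁, P₂] F / F.card)
    {A₁ A₂ : Set X} (hA₁ : MeasurableSet A₁) (hA₂ : MeasurableSet A₂) (hA₁P : A₁ ⊆ P₁)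
    (hA₂P : A₂ ⊆ P₂) (hμ₁ : μ.real (P₁ \ A₁) ≤ d ^ 3 / 1536)
    (hμ₂ : μ.real (P₂ \ A₂) ≤ d ^ 3 / 1536) :
    ∃ I ⊆ F, d ^ 2 / 64 * F.card ≤ I.card ∧ IndepRel ![A₁, A₂] D (I : Set G) := by
  have hn : (0 : ℝ) < F.card := lt_of_lt_of_le (by positivity) hF
  have hP₂ : P₂ = P₁ᶜ := (IsCompl.of_eq hdisj.eq_bot hunion).compl_eq.symm
  rw [le_div_iff₀ hn, hP₂, HJoin_pair_compl_eq_visitEntropy] at hH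
  have hE (s : G) : μ.real (D s ∩ (fun x => s • x) ⁻¹' (A₁ ∪ A₂))ᶜ ≤ d ^ 3 / 512 := by
    linarith [hDμ s, measureReal_compl_inter_preimage_smul_le hinv s (hD s) hA₁ hA₂ hunion]
  obtain ⟨I, hIF, hcard, hI⟩ := exists_shattersOff_of_le_visitEntropy
    (fun s => measurable_const_smul s hP₁)
    (fun s => ((hD s).inter (measurable_const_smul s (hA₁.union hA₂))).compl) hd hE hF hH
  exact ⟨I, hIF, hcard, hI.indepRel hA₁P (hdisj.mono_right hA₂P)⟩

end Dynamics

/-- Lemma: quantitative production of independence sets from entropy, relative to maps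
`D : G → Set X` with `μ(D s) ≥ 1 - δ`. -/
theorem stmt3 {G X : Type*} [Group G] [TopologicalSpace X] [CompactSpace X] [T2Space X]
    [MulAction G X] [ContinuousConstSMul G X] [MeasurableSpace X] [BorelSpace X]
    (μ : Measure X) [IsProbabilityMeasure μ] (hinv : InvariantMeasure G μ) :
    ∀ d : ℝ, 0 < d → ∃ δ c M : ℝ, 0 < δ ∧ 0 < c ∧ 0 < M ∧
      ∀ F : Finset G, M ≤ (F.card : ℝ) →
      ∀ D : G → Set X, (∀ s, MeasurableSet (D s)) → (∀ s, 1 - δ ≤ (μ (D s)).toReal) →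
      ∀ P₁ P₂ : Set X, MeasurableSet P₁ → MeasurableSet P₂ → Disjoint P₁ P₂ →
        P₁ ∪ P₂ = Set.univ →
        d ≤ HJoin μ ![P₁, P₂] F / (F.card : ℝ) →
      ∀ A₁ A₂ : Set X, MeasurableSet A₁ → MeasurableSet A₂ → A₁ ⊆ P₁ → A₂ ⊆ P₂ →
        (μ (P₁ \ A₁)).toReal < δ → (μ (P₂ \ A₂)).toReal < δ →
        ∃ I : Finset G, I ⊆ F ∧ c * (F.card : ℝ) ≤ (I.card : ℝ) ∧
          IndepRel ![A₁, A₂] D (↑I : Set G) := fun d hd =>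
  ⟨d ^ 3 / 1536, d ^ 2 / 64, 16 / d, by positivity, by positivity, by positivity,
    fun _ hF _ hD hDμ _ _ hP₁ _ hdisj hunion hH _ _ hA₁ hA₂ hA₁P hA₂P hμ₁ hμ₂ =>
      stmt3_general μ hinv hd hF hD hDμ hP₁ hdisj hunion hH hA₁ hA₂ hA₁P hA₂P hμ₁.le hμ₂.le⟩
end

section
/- Let A be a Borel subset of X with μ(A) > 0. Then there are d > 0 and δ > 0 such that for every finite subset F ⊆ G and every Borel set D ⊆ X with μ(D) ≥ 1−δ there is a subset H ⊆ F with |H| ≥ d|F| and D ∩ (⋂_{s∈H} s⁻¹A) ≠ ∅. -/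
open MeasureTheory

/-!
Each translate `s⁻¹A` has measure `μ A`, so it meets `D` in measure at least `μ A + μ D - 1`.
Averaging over `D` the number of `s ∈ F` with `x ∈ s⁻¹A`, some `x ∈ D` lies in at least
`(μ A + μ D - 1) |F|` of these translates, and `H` collects the corresponding `s`. With
`δ = μ A / 2` this proportion is at least `μ A / 2`.
-/

theorem card_filter_mem_eq_sum_indicator {ι X : Type*} (E : ι → Set X)
    [∀ i, DecidablePred (· ∈ E i)] (F : Finset ι) (x : X) :
    ((F.filter (x ∈ E ·)).card : ℝ) = ∑ i ∈ F, (E i).indicator 1 x := by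
  simp [Set.indicator_apply]

theorem measureReal_add_le_measureReal_inter_add_univ {X : Type*} [MeasurableSpace X]
    {μ : Measure X} [IsFiniteMeasure μ] {s : Set X} (hs : NullMeasurableSet s μ) (t : Set X) :
    μ.real s + μ.real t ≤ μ.real (s ∩ t) + μ.real Set.univ := by
  rw [← measureReal_union_add_inter₀' hs, add_comm]
  exact add_le_add_right (measureReal_mono (Set.subset_univ _)) _

section Multiplicity

variable {ι X : Type*} [MeasurableSpace X] {μ : Measure X} {E : ι → Set X}
  [∀ i, DecidablePred (· ∈ E i)] {F : Finset ι} {D : Set X}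

theorem integrable_card_filter_mem (hE : ∀ i ∈ F, NullMeasurableSet (E i) μ)
    (hEfin : ∀ i ∈ F, μ (E i) ≠ ⊤) :
    Integrable (fun x ↦ ((F.filter (x ∈ E ·)).card : ℝ)) μ := by
  simp_rw [card_filter_mem_eq_sum_indicator]
  exact integrable_finsetSum F fun i hi ↦
    (integrableOn_const (hEfin i hi)).integrable_indicator₀ (hE i hi)

theorem integral_card_filter_mem (hE : ∀ i ∈ F, NullMeasurableSet (E i) μ)
    (hEfin : ∀ i ∈ F, μ (E i) ≠ ⊤) :
    ∫ x, ((F.filter (x ∈ E ·)).card : ℝ) ∂μ = ∑ i ∈ F, μ.real (E i) := by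
  simp_rw [card_filter_mem_eq_sum_indicator]
  rw [integral_finsetSum F fun i hi ↦
    (integrableOn_const (hEfin i hi)).integrable_indicator₀ (hE i hi)]
  refine Finset.sum_congr rfl fun i hi ↦ ?_
  simp [integral_indicator₀ (hE i hi)]

theorem exists_mem_sum_measureReal_inter_le (hE : ∀ i ∈ F, NullMeasurableSet (E i) μ)
    (hD : μ D ≠ 0) (hDfin : μ D ≠ ⊤) :
    ∃ x ∈ D, ∑ i ∈ F, μ.real (E i ∩ D) ≤ μ.real D * (F.filter (x ∈ E ·)).card := by
  have : IsFiniteMeasure (μ.restrict D) := isFiniteMeasure_restrict.2 hDfin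
  have hED (i) (hi : i ∈ F) : NullMeasurableSet (E i) (μ.restrict D) :=
    (hE i hi).mono_ac Measure.absolutelyContinuous_restrict
  have hEDfin (i) (_ : i ∈ F) : μ.restrict D (E i) ≠ ⊤ := measure_ne_top _ _
  obtain ⟨x, hxD, hx⟩ := exists_setAverage_le hD hDfin (integrable_card_filter_mem hED hEDfin)
  refine ⟨x, hxD, ?_⟩
  have hDpos : 0 < μ.real D := ENNReal.toReal_pos hD hDfin
  rw [setAverage_eq, smul_eq_mul, inv_mul_le_iff₀ hDpos] at hx
  calc ∑ i ∈ F, μ.real (E i ∩ D) = ∑ i ∈ F, (μ.restrict D).real (E i) :=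
        Finset.sum_congr rfl fun i hi ↦ (measureReal_restrict_apply₀ (hED i hi)).symm
    _ = ∫ x in D, ((F.filter (x ∈ E ·)).card : ℝ) ∂μ := (integral_card_filter_mem hED hEDfin).symm
    _ ≤ μ.real D * (F.filter (x ∈ E ·)).card := hx

theorem exists_mem_mul_card_le_card_filter_mem [IsFiniteMeasure μ] {a : ℝ}
    (hE : ∀ i ∈ F, NullMeasurableSet (E i) μ) (ha : ∀ i ∈ F, a ≤ μ.real (E i)) (hD : μ D ≠ 0) :
    ∃ x ∈ D, (a + μ.real D - μ.real Set.univ) * F.card ≤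
      μ.real D * (F.filter (x ∈ E ·)).card := by
  obtain ⟨x, hxD, hx⟩ := exists_mem_sum_measureReal_inter_le hE hD (measure_ne_top μ D)
  refine ⟨x, hxD, le_trans ?_ hx⟩
  rw [mul_comm, ← nsmul_eq_mul]
  refine F.card_nsmul_le_sum _ _ fun i hi ↦ ?_
  linarith [ha i hi, measureReal_add_le_measureReal_inter_add_univ (hE i hi) D]

end Multiplicity

theorem stmt5_general {ι X : Type*} [MeasurableSpace X] (μ : Measure X) [IsProbabilityMeasure μ]
    (E : ι → Set X) (hE : ∀ i, NullMeasurableSet (E i) μ)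
    {a : ℝ} (ha : 0 < a) (haE : ∀ i, a ≤ μ.real (E i)) :
    ∃ d δ : ℝ, 0 < d ∧ 0 < δ ∧
      ∀ (F : Finset ι) (D : Set X), 1 - δ ≤ μ.real D →
        ∃ H : Finset ι, H ⊆ F ∧ d * (F.card : ℝ) ≤ (H.card : ℝ) ∧
          (D ∩ ⋂ i ∈ H, E i).Nonempty := by
  classical
  -- The minimum with `1` keeps `D` nonempty when `ι` is empty, where `a` may exceed `1`.
  refine ⟨a / 2, min a 1 / 2, by positivity, by positivity, fun F D hD ↦ ?_⟩
  have hδa : min a 1 ≤ a := min_le_left a 1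
  have hδ1 : min a 1 ≤ 1 := min_le_right a 1
  have hD0 : μ D ≠ 0 := fun h ↦ by
    rw [measureReal_def, h, ENNReal.toReal_zero] at hD
    linarith
  obtain ⟨x, hxD, hx⟩ := exists_mem_mul_card_le_card_filter_mem (F := F)
    (fun i _ ↦ hE i) (fun i _ ↦ haE i) hD0
  refine ⟨F.filter (x ∈ E ·), F.filter_subset _, ?_, x, hxD, by simp⟩
  calc a / 2 * F.card ≤ (a + μ.real D - μ.real Set.univ) * F.card := by
        gcongr
        rw [probReal_univ]
        linarith
    _ ≤ μ.real D * (F.filter (x ∈ E ·)).card := hx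
    _ ≤ (F.filter (x ∈ E ·)).card := mul_le_of_le_one_left (by positivity) measureReal_le_one

/-- Lemma: if `μ(A) > 0` then there are `d, δ > 0` such that for every finite `F ⊆ G`
and every Borel `D` with `μ(D) ≥ 1 − δ` there is `H ⊆ F` with `|H| ≥ d|F|` and
`D ∩ ⋂_{s ∈ H} s⁻¹A ≠ ∅`. -/
theorem stmt5 {G X : Type*} [Group G] [TopologicalSpace X] [CompactSpace X] [T2Space X]
    [MulAction G X] [ContinuousConstSMul G X] [MeasurableSpace X] [BorelSpace X]
    (μ : Measure X) [IsProbabilityMeasure μ]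
    (hinv : ∀ (s : G) (B : Set X), MeasurableSet B → μ ((fun x => s • x) ⁻¹' B) = μ B)
    (A : Set X) (hA : MeasurableSet A) (hApos : 0 < μ A) :
    ∃ d δ : ℝ, 0 < d ∧ 0 < δ ∧
      ∀ (F : Finset G) (D : Set X), MeasurableSet D → 1 - δ ≤ (μ D).toReal →
        ∃ H : Finset G, H ⊆ F ∧ d * (F.card : ℝ) ≤ (H.card : ℝ) ∧
          (D ∩ ⋂ s ∈ H, (fun x => s • x) ⁻¹' A).Nonempty := by
  obtain ⟨d, δ, hd, hδ, h⟩ := stmt5_general μ (fun s : G ↦ (fun x ↦ s • x) ⁻¹' A)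
    (fun s ↦ ((continuous_const_smul s).measurable hA).nullMeasurableSet)
    (ENNReal.toReal_pos hApos.ne' (measure_ne_top μ A))
    (fun s ↦ (congrArg ENNReal.toReal (hinv s A hA)).ge)
  exact ⟨d, δ, hd, hδ, fun F D _ ↦ h F D⟩
end
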